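/- arXiv:1602.06376 — 2 statements merged into one kernel-verified Lean document; each statement's English description precedes it below -/
import Mathlib

section
/- Let n be an even integer and let g : ℝⁿ → ℝ be a smooth function. Then for all x ∈ ℝⁿ and t > 0, S_n(t)g(x) = J_n(t)g(x) + e^{-t/2} W_n(t)g(x), where J_n(t)g(x) = (c_n e^{-t/2}/2^{n-2}) ∫_{B_t(x)} k_{n/2}((1/2)√(t² − r²)) g(y) dy and W_n(t)g(x) = 2 c_n Σ_{j=0}^{(n-2)/2} (1/(8^j j!)) ((1/t) ∂/∂t)^{(n-2)/2 − j} ∫_{B_t(x)} (1/√(t² − r²)) g(y) dy. -/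
open Real Set Filter MeasureTheory Metric
open scoped Nat Topology

noncomputable section

/-- The even-dimensional kernel `k_ℓ(s) = Σ_{j=0}^∞ s^{2j+1}/((2(j+ℓ))‼ (2j+1)‼)`. -/
def kEven (ℓ : ℕ) (s : ℝ) : ℝ :=
  ∑' j : ℕ, s ^ (2 * j + 1) / (((2 * (j + ℓ))‼ : ℝ) * (((2 * j + 1)‼ : ℝ)))

/-- `k`-fold iterate of the operator `F ↦ (1/t) ∂F/∂t` in the `t`-variable. -/
def iterOp : ℕ → (ℝ → ℝ) → ℝ → ℝ
  | 0, F, t => F t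
  | (k + 1), F, t => (1 / t) * deriv (iterOp k F) t

/-- `c_n = 2^{-(n+2)/2} π^{-n/2}` for even `n`. -/
def cnEven (n : ℕ) : ℝ := (2 : ℝ) ^ (-((n : ℝ) + 2) / 2) * π ^ (-(n : ℝ) / 2)

/-- The solution operator `S_n(t)g(x)` for even `n`. -/
def Sn (n : ℕ) (g : EuclideanSpace ℝ (Fin n) → ℝ) (x : EuclideanSpace ℝ (Fin n)) (t : ℝ) : ℝ :=
  2 * cnEven n * exp (-t / 2) *
    iterOp ((n - 2) / 2)
      (fun s => ∫ y in closedBall x s,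
        (Real.cosh ((1 / 2) * Real.sqrt (s ^ 2 - ‖x - y‖ ^ 2)) /
          Real.sqrt (s ^ 2 - ‖x - y‖ ^ 2)) * g y) t

/-- The heat part `J_n(t)g(x)` for even `n`. -/
def Jn (n : ℕ) (g : EuclideanSpace ℝ (Fin n) → ℝ) (x : EuclideanSpace ℝ (Fin n)) (t : ℝ) : ℝ :=
  (cnEven n * exp (-t / 2) / 2 ^ (n - 2)) *
    ∫ y in closedBall x t, kEven (n / 2) ((1 / 2) * Real.sqrt (t ^ 2 - ‖x - y‖ ^ 2)) * g y

/-- The wave part `W_n(t)g(x)` for even `n`. -/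
def Wn (n : ℕ) (g : EuclideanSpace ℝ (Fin n) → ℝ) (x : EuclideanSpace ℝ (Fin n)) (t : ℝ) : ℝ :=
  2 * cnEven n * ∑ j ∈ Finset.range ((n - 2) / 2 + 1),
    (1 / (8 ^ j * (j ! : ℝ))) *
      iterOp ((n - 2) / 2 - j)
        (fun s => ∫ y in closedBall x s,
          (1 / Real.sqrt (s ^ 2 - ‖x - y‖ ^ 2)) * g y) t

/-!
With `r = |x - y|` and `a = √(s² - r²)`, every kernel in the statement has the form `f(a)/a`;
write `A[f](s)` for the corresponding integral over the ball of radius `s`. By Fubini and the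
fundamental theorem of calculus along the fibres `y = const`, `s⁻¹ ∂ₛ A[a Φ] = A[Φ']` whenever
`Φ(0) = 0`, so no boundary term ever appears. Differentiating the defining series gives
`k_ℓ'(s) = 1/(2ℓ)‼ + s k_{ℓ+1}(s)` and `cosh s = 1 + s k_1(s)`. Hence each application of
`s⁻¹ ∂ₛ` to `A[a k_ℓ(a/2)]` splits off a multiple of the wave integral `A[1]` and replaces `k_ℓ`
by `k_{ℓ+1}`; the split-off multiples make up `W_n`, and what remains after `(n-2)/2` applications
is `J_n`. That `A[1]` is as smooth as `g` is seen by rescaling to the unit ball, which leaves the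
fixed integrable weight `(1 - |z|²)^{-1/2}`.
-/

lemma kEven_zero (ℓ : ℕ) : kEven ℓ 0 = 0 := by simp [kEven]

lemma kEven_deriv_term_le (ℓ j : ℕ) (s : ℝ) :
    (2 * j + 1) * s ^ (2 * j) / ((2 * (j + ℓ))‼ * (2 * j + 1)‼ : ℝ) ≤ (s ^ 2) ^ j / j ! := by
  have hfact : j ! ≤ (2 * (j + ℓ))‼ := by
    rw [Nat.doubleFactorial_two_mul]
    exact (Nat.factorial_le (Nat.le_add_right j ℓ)).trans
      (Nat.le_mul_of_pos_left _ (by positivity))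
  have hodd : 2 * j + 1 ≤ (2 * j + 1)‼ := by
    rw [Nat.doubleFactorial_add_one]
    exact Nat.le_mul_of_pos_right _ (Nat.doubleFactorial_pos _)
  have hdenom : (j ! * (2 * j + 1) : ℝ) ≤ (2 * (j + ℓ))‼ * (2 * j + 1)‼ := by
    exact_mod_cast Nat.mul_le_mul hfact hodd
  calc (2 * j + 1) * s ^ (2 * j) / ((2 * (j + ℓ))‼ * (2 * j + 1)‼ : ℝ)
      ≤ (2 * j + 1) * s ^ (2 * j) / (j ! * (2 * j + 1)) := by
        rw [pow_mul]; gcongr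
    _ = (s ^ 2) ^ j / j ! := by
        rw [pow_mul]; field_simp

lemma summable_kEven_deriv (ℓ : ℕ) (s : ℝ) :
    Summable fun j : ℕ => (2 * j + 1) * s ^ (2 * j) / ((2 * (j + ℓ))‼ * (2 * j + 1)‼ : ℝ) :=
  .of_nonneg_of_le (fun j => by rw [pow_mul]; positivity) (kEven_deriv_term_le ℓ · s)
    (Real.summable_pow_div_factorial (s ^ 2))

lemma tsum_kEven_deriv (ℓ : ℕ) (s : ℝ) :
    ∑' j : ℕ, (2 * j + 1) * s ^ (2 * j) / ((2 * (j + ℓ))‼ * (2 * j + 1)‼ : ℝ) =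
      1 / (2 * ℓ)‼ + s * kEven (ℓ + 1) s := by
  rw [(summable_kEven_deriv ℓ s).tsum_eq_zero_add, kEven, ← tsum_mul_left]
  congr 1
  · simp
  · refine tsum_congr fun j => ?_
    have hodd : (2 * (j + 1) + 1)‼ = (2 * j + 3) * (2 * j + 1)‼ := Nat.doubleFactorial_add_two _
    rw [hodd, add_right_comm, add_assoc j]
    push_cast
    field_simp
    ring

lemma hasDerivAt_kEven (ℓ : ℕ) (s : ℝ) :
    HasDerivAt (kEven ℓ) (1 / (2 * ℓ)‼ + s * kEven (ℓ + 1) s) s := by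
  rw [← tsum_kEven_deriv]
  refine hasDerivAt_tsum_of_isPreconnected (t := ball 0 (|s| + 1)) (y₀ := 0)
    (g := fun j y => y ^ (2 * j + 1) / ((2 * (j + ℓ))‼ * (2 * j + 1)‼ : ℝ))
    (g' := fun j y => (2 * j + 1) * y ^ (2 * j) / ((2 * (j + ℓ))‼ * (2 * j + 1)‼ : ℝ))
    (Real.summable_pow_div_factorial ((|s| + 1) ^ 2)) isOpen_ball
    (convex_ball 0 (|s| + 1)).isPreconnected (fun j y _ => ?_) (fun j y hy => ?_)
    (mem_ball_self (by positivity)) (by simp [summable_zero])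
    (mem_ball_zero_iff.2 (lt_add_one |s|))
  · simpa using (hasDerivAt_pow (2 * j + 1) y).div_const ((2 * (j + ℓ))‼ * (2 * j + 1)‼ : ℝ)
  · rw [Real.norm_of_nonneg (by rw [pow_mul]; positivity)]
    refine (kEven_deriv_term_le ℓ j y).trans ?_
    have : y ^ 2 ≤ (|s| + 1) ^ 2 := by
      rw [mem_ball_zero_iff, Real.norm_eq_abs] at hy
      exact sq_le_sq' (neg_le_of_abs_le hy.le) (le_of_abs_le hy.le)
    gcongr

lemma continuous_kEven (ℓ : ℕ) : Continuous (kEven ℓ) :=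
  continuous_iff_continuousAt.2 fun s => (hasDerivAt_kEven ℓ s).continuousAt

lemma cosh_eq_one_add_mul_kEven (s : ℝ) : Real.cosh s = 1 + s * kEven 1 s := by
  rw [Real.cosh_eq_tsum, s.hasSum_cosh.summable.tsum_eq_zero_add, kEven, ← tsum_mul_left]
  congr 1
  · simp
  · refine tsum_congr fun j => ?_
    rw [← Nat.cast_mul, mul_add_one, Nat.factorial_eq_mul_doubleFactorial]
    ring

section IterOp

variable {F P : ℝ → ℝ}

lemma contDiffOn_iterOp {j k : ℕ} (hF : ContDiffOn ℝ (j + k : ℕ) F (Ioi 0)) :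
    ContDiffOn ℝ j (iterOp k F) (Ioi 0) := by
  induction k generalizing j with
  | zero => exact hF
  | succ k ih =>
    have hderiv : ContDiffOn ℝ j (deriv (iterOp k F)) (Ioi 0) :=
      ((contDiffOn_succ_iff_deriv_of_isOpen isOpen_Ioi).1
        (ih (j := j + 1) (by rwa [add_right_comm, add_assoc]))).2.2
    exact (contDiffOn_const.div contDiffOn_id fun t ht => ne_of_gt ht).mul hderiv

lemma hasDerivAt_iterOp {k m : ℕ} (hF : ContDiffOn ℝ m F (Ioi 0)) (hkm : k < m) {t : ℝ}
    (ht : 0 < t) : HasDerivAt (iterOp k F) (t * iterOp (k + 1) F t) t := by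
  have hdiff : DifferentiableAt ℝ (iterOp k F) t :=
    ((contDiffOn_iterOp (j := 1) (hF.of_le (by exact_mod_cast (by lia)))).differentiableOn
      one_ne_zero).differentiableAt (Ioi_mem_nhds ht)
  rw [iterOp, one_div, mul_inv_cancel_left₀ ht.ne']
  exact hdiff.hasDerivAt

lemma iterOp_succ_eq_of_hasDerivAt {k : ℕ} {t c : ℝ} (ht : 0 < t)
    (h : HasDerivAt (iterOp k F) (t * c) t) : iterOp (k + 1) F t = c := by
  rw [iterOp, h.deriv, one_div, inv_mul_cancel_left₀ ht.ne']

lemma iterOp_eq_sum_add {K : ℕ → ℝ → ℝ} {a : ℕ → ℝ} {b : ℝ}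
    (hF : ∀ t, 0 < t → F t = a 0 * P t + b * K 0 t)
    (hK : ∀ ℓ t, 0 < t → HasDerivAt (K ℓ) (t * (a (ℓ + 1) * P t + b * K (ℓ + 1) t)) t)
    {m : ℕ} (hP : ContDiffOn ℝ m P (Ioi 0)) {t : ℝ} (ht : 0 < t) :
    iterOp m F t =
      ∑ j ∈ Finset.range (m + 1), b ^ j * a j * iterOp (m - j) P t + b ^ (m + 1) * K m t := by
  induction m generalizing t with
  | zero => simpa [iterOp] using hF t ht
  | succ m ih =>
    have hsum : HasDerivAt
        (fun s => ∑ j ∈ Finset.range (m + 1), b ^ j * a j * iterOp (m - j) P s)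
        (∑ j ∈ Finset.range (m + 1), b ^ j * a j * (t * iterOp (m - j + 1) P t)) t :=
      .fun_sum fun j _ => (hasDerivAt_iterOp hP (by lia) ht).const_mul _
    have hstep := (hsum.add ((hK m t ht).const_mul (b ^ (m + 1)))).congr_of_eventuallyEq
      (eventually_of_mem (Ioi_mem_nhds ht) fun s hs =>
        ih (hP.of_le (by exact_mod_cast m.le_succ)) hs)
    refine iterOp_succ_eq_of_hasDerivAt ht (hstep.congr_deriv ?_)
    have hshift : ∑ j ∈ Finset.range (m + 1), b ^ j * a j * iterOp (m + 1 - j) P t =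
        ∑ j ∈ Finset.range (m + 1), b ^ j * a j * iterOp (m - j + 1) P t :=
      Finset.sum_congr rfl fun j hj => by
        rw [Nat.succ_sub (Nat.lt_succ_iff.1 (Finset.mem_range.1 hj))]
    rw [Finset.sum_range_succ _ (m + 1), hshift, Nat.sub_self, iterOp]
    simp only [mul_left_comm _ t, ← Finset.mul_sum]
    ring

end IterOp

section WeightedParametricIntegral

variable {X F : Type*} [MeasurableSpace X] [NormedAddCommGroup F] [NormedSpace ℝ F]
  {μ : Measure X} {K : Set X} {w : X → ℝ}

lemma continuous_setIntegral_smul {S : Type*} [TopologicalSpace S] [FirstCountableTopology S]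
    [WeaklyLocallyCompactSpace S] [TopologicalSpace X] [T2Space X] [OpensMeasurableSpace X]
    [SecondCountableTopologyEither X F] (hK : IsCompact K) (hw : IntegrableOn w K μ)
    {G : S × X → F} (hG : Continuous G) : Continuous fun s => ∫ z in K, w z • G (s, z) ∂μ := by
  refine continuous_iff_continuousAt.2 fun s => ?_
  obtain ⟨U, hU, hUs⟩ := exists_compact_mem_nhds s
  obtain ⟨C, hC⟩ := (hU.prod hK).exists_bound_of_continuousOn hG.continuousOn
  refine continuousAt_of_dominated (bound := fun z => ‖w z‖ * C)
    (.of_forall fun σ => (hw.smul_continuousOn (by fun_prop) hK).aestronglyMeasurable)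
    (eventually_of_mem hUs fun σ hσ => ae_restrict_of_forall_mem hK.measurableSet fun z hz => ?_)
    (hw.norm.mul_const C) (.of_forall fun z => by fun_prop)
  rw [norm_smul]
  gcongr
  exact hC (σ, z) ⟨hσ, hz⟩

variable [NormedAddCommGroup X] [NormedSpace ℝ X] [OpensMeasurableSpace X]
  [SecondCountableTopologyEither X F]

lemma hasDerivAt_setIntegral_smul (hK : IsCompact K) (hw : IntegrableOn w K μ)
    {G : ℝ × X → F} (hG : ContDiff ℝ 1 G) (s : ℝ) :
    HasDerivAt (fun s => ∫ z in K, w z • G (s, z) ∂μ)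
      (∫ z in K, w z • fderiv ℝ G (s, z) (1, 0) ∂μ) s := by
  have hG' : Continuous fun p => fderiv ℝ G p (1, 0) :=
    (hG.continuous_fderiv one_ne_zero).clm_apply continuous_const
  have hint {H : ℝ × X → F} (hH : Continuous H) (σ : ℝ) :
      IntegrableOn (fun z => w z • H (σ, z)) K μ :=
    hw.smul_continuousOn (by fun_prop) hK
  obtain ⟨C, hC⟩ := ((isCompact_closedBall s 1).prod hK).exists_bound_of_continuousOn
    hG'.continuousOn
  refine (hasDerivAt_integral_of_dominated_loc_of_deriv_le
    (F' := fun σ z => w z • fderiv ℝ G (σ, z) (1, 0)) (bound := fun z => ‖w z‖ * C)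
    (closedBall_mem_nhds s one_pos)
    (.of_forall fun σ => (hint hG.continuous σ).aestronglyMeasurable) (hint hG.continuous s)
    (hint hG' s).aestronglyMeasurable
    (ae_restrict_of_forall_mem hK.measurableSet fun z hz σ hσ => ?_) (hw.norm.mul_const C)
    (.of_forall fun z σ _ => HasDerivAt.const_smul _ ?_)).2
  · rw [norm_smul]
    gcongr
    exact hC (σ, z) ⟨hσ, hz⟩
  · exact (hG.differentiable one_ne_zero (σ, z)).hasFDerivAt.comp_hasDerivAt σ
      ((hasDerivAt_id σ).prodMk (hasDerivAt_const σ z))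

lemma contDiff_setIntegral_smul (hK : IsCompact K) (hw : IntegrableOn w K μ)
    {k : ℕ} {G : ℝ × X → F} (hG : ContDiff ℝ k G) :
    ContDiff ℝ k fun s => ∫ z in K, w z • G (s, z) ∂μ := by
  induction k generalizing G with
  | zero => exact contDiff_zero.2 (continuous_setIntegral_smul hK hw hG.continuous)
  | succ k ih =>
    have hderiv := hasDerivAt_setIntegral_smul hK hw (hG.of_le (by exact_mod_cast k.succ_pos))
    push_cast at hG ⊢
    refine contDiff_succ_iff_deriv.2 ⟨fun s => (hderiv s).differentiableAt, by simp, ?_⟩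
    rw [funext fun s => (hderiv s).deriv]
    exact ih ((hG.fderiv_right le_rfl).clm_apply contDiff_const)

end WeightedParametricIntegral

section OneDimensional

lemma sqrt_sq_sub_sq_eq_zero {s r : ℝ} (hs : 0 ≤ s) (h : s ≤ r) : √(s ^ 2 - r ^ 2) = 0 :=
  Real.sqrt_eq_zero_of_nonpos (sub_nonpos.2 (pow_le_pow_left₀ hs h 2))

lemma hasDerivAt_sqrt_sq_sub_sq {r σ : ℝ} (hr : 0 ≤ r) (h : r < σ) :
    HasDerivAt (fun σ => √(σ ^ 2 - r ^ 2)) (σ / √(σ ^ 2 - r ^ 2)) σ := by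
  have hpos : 0 < σ ^ 2 - r ^ 2 := sub_pos.2 (pow_lt_pow_left₀ h hr two_ne_zero)
  convert! ((hasDerivAt_pow 2 σ).sub_const (r ^ 2)).sqrt hpos.ne' using 1
  simp [mul_div_mul_left]

variable {r T : ℝ}

lemma div_sqrt_sq_sub_sq_eqOn_zero (hr : 0 ≤ r) :
    EqOn (fun σ => σ / √(σ ^ 2 - r ^ 2)) 0 (uIcc 0 r) := fun σ hσ => by
  rw [uIcc_of_le hr] at hσ
  simp [sqrt_sq_sub_sq_eq_zero hσ.1 hσ.2]

lemma intervalIntegrable_div_sqrt_sq_sub_sq (hr : 0 ≤ r) (hrT : r ≤ T) :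
    IntervalIntegrable (fun σ => σ / √(σ ^ 2 - r ^ 2)) volume 0 T := by
  refine IntervalIntegrable.trans (b := r)
    ((intervalIntegrable_congr ((div_sqrt_sq_sub_sq_eqOn_zero hr).mono uIoc_subset_uIcc)).2 .zero)
    ?_
  rw [intervalIntegrable_iff_integrableOn_Ioc_of_le hrT]
  exact intervalIntegral.integrableOn_deriv_of_nonneg (by fun_prop)
    (fun σ hσ => hasDerivAt_sqrt_sq_sub_sq hr hσ.1)
    fun σ hσ => div_nonneg (hr.trans hσ.1.le) (Real.sqrt_nonneg _)

lemma integral_div_sqrt_mul_deriv_comp_sqrt {Φ Φ' : ℝ → ℝ} (hΦ : ∀ a, HasDerivAt Φ (Φ' a) a)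
    (hΦ' : Continuous Φ') (hΦ0 : Φ 0 = 0) (hr : 0 ≤ r) (hrT : r ≤ T) :
    ∫ σ in 0..T, σ / √(σ ^ 2 - r ^ 2) * Φ' √(σ ^ 2 - r ^ 2) = Φ √(T ^ 2 - r ^ 2) := by
  have hΦc : Continuous Φ := continuous_iff_continuousAt.2 fun a => (hΦ a).continuousAt
  have hint : IntervalIntegrable (fun σ => σ / √(σ ^ 2 - r ^ 2) * Φ' √(σ ^ 2 - r ^ 2))
      volume 0 T :=
    (intervalIntegrable_div_sqrt_sq_sub_sq hr hrT).mul_continuousOn (by fun_prop)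
  have hr_mem : r ∈ uIcc 0 T := by rw [uIcc_of_le (hr.trans hrT)]; exact ⟨hr, hrT⟩
  have hleft := hint.mono_set (uIcc_subset_uIcc left_mem_uIcc hr_mem)
  have hright := hint.mono_set (uIcc_subset_uIcc hr_mem right_mem_uIcc)
  have hzero : ∫ σ in 0..r, σ / √(σ ^ 2 - r ^ 2) * Φ' √(σ ^ 2 - r ^ 2) = 0 := by
    rw [intervalIntegral.integral_congr (g := 0) fun σ hσ => by
      simpa using Or.inl (div_eq_zero_iff.1 (div_sqrt_sq_sub_sq_eqOn_zero hr hσ))]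
    simp
  rw [← intervalIntegral.integral_add_adjacent_intervals hleft hright, hzero, zero_add,
    intervalIntegral.integral_eq_sub_of_hasDerivAt_of_le hrT
      (f := fun σ => Φ √(σ ^ 2 - r ^ 2)) (by fun_prop) (fun σ hσ => ?_) hright]
  · simp [hΦ0]
  · exact ((hΦ _).comp σ (hasDerivAt_sqrt_sq_sub_sq hr hσ.1)).congr_deriv (mul_comm _ _)

end OneDimensional

section AbelIntegral

variable {E : Type*} [NormedAddCommGroup E] [MeasurableSpace E] (μ : Measure E)

/-- The Abel-type integral over the ball of radius `s` with kernel `f(a)/a`, `a = √(s² - ‖z‖²)`.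
On the bounding sphere, a null set, the kernel has the junk value `f(0)/0 = 0`. -/
def abelIntegral (f : ℝ → ℝ) (h : E → ℝ) (s : ℝ) : ℝ :=
  ∫ z in closedBall 0 s, f √(s ^ 2 - ‖z‖ ^ 2) / √(s ^ 2 - ‖z‖ ^ 2) * h z ∂μ

variable [BorelSpace E]

lemma abelIntegral_eq_setIntegral_of_le (f : ℝ → ℝ) (h : E → ℝ) {s T : ℝ} (hs : 0 ≤ s)
    (hsT : s ≤ T) : abelIntegral μ f h s =
      ∫ z in closedBall 0 T, f √(s ^ 2 - ‖z‖ ^ 2) / √(s ^ 2 - ‖z‖ ^ 2) * h z ∂μ := by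
  refine (setIntegral_eq_of_subset_of_forall_sdiff_eq_zero measurableSet_closedBall
    (closedBall_subset_closedBall hsT) fun z hz => ?_).symm
  have hsz : s ≤ ‖z‖ := by simpa using (not_le.1 (mt mem_closedBall_zero_iff.2 hz.2)).le
  simp [sqrt_sq_sub_sq_eq_zero hs hsz]

variable [NormedSpace ℝ E] [FiniteDimensional ℝ E] [μ.IsAddHaarMeasure]

lemma setIntegral_closedBall_eq_abelIntegral (f : ℝ → ℝ) (g : E → ℝ) (x : E) :
    (fun s => ∫ y in closedBall x s,
        f √(s ^ 2 - ‖x - y‖ ^ 2) / √(s ^ 2 - ‖x - y‖ ^ 2) * g y ∂μ) =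
      abelIntegral μ f (fun z => g (x - z)) := by
  ext s
  have hball : (fun z => x - z) ⁻¹' closedBall 0 s = closedBall x s := by
    ext y; simp [dist_eq_norm, norm_sub_rev x]
  rw [abelIntegral, ← hball, ← (Measure.measurePreserving_sub_left μ x).setIntegral_preimage_emb
    (Homeomorph.subLeft x).measurableEmbedding _ (closedBall 0 s)]
  simp

lemma setIntegral_closedBall_comp_sqrt_eq_abelIntegral {f : ℝ → ℝ} (hf0 : f 0 = 0) (g : E → ℝ)
    (x : E) (s : ℝ) : ∫ y in closedBall x s, f √(s ^ 2 - ‖x - y‖ ^ 2) * g y ∂μ =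
      abelIntegral μ (fun r => r * f r) (fun z => g (x - z)) s := by
  rw [← congrFun (setIntegral_closedBall_eq_abelIntegral μ _ g x) s]
  congr with y
  rcases eq_or_ne √(s ^ 2 - ‖x - y‖ ^ 2) 0 with h0 | h0
  · simp [h0, hf0]
  · rw [mul_div_cancel_left₀ _ h0]

lemma abelIntegral_eq_scaled (f : ℝ → ℝ) (h : E → ℝ) {s : ℝ} (hs : 0 < s) :
    abelIntegral μ f h s = s ^ Module.finrank ℝ E / s *
      ∫ z in closedBall 0 1, (√(1 - ‖z‖ ^ 2))⁻¹ • (f (s * √(1 - ‖z‖ ^ 2)) * h (s • z)) ∂μ := by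
  have hsqrt (z : E) : √(s ^ 2 - ‖s • z‖ ^ 2) = s * √(1 - ‖z‖ ^ 2) := by
    rw [norm_smul, Real.norm_of_nonneg hs.le, mul_pow, ← mul_one_sub,
      Real.sqrt_mul (sq_nonneg s), Real.sqrt_sq hs.le]
  have hscale := Measure.setIntegral_comp_smul_of_pos μ
    (fun z => f √(s ^ 2 - ‖z‖ ^ 2) / √(s ^ 2 - ‖z‖ ^ 2) * h z) (closedBall 0 1) hs
  rw [smul_unitClosedBall_of_nonneg hs.le, ← abelIntegral, smul_eq_mul,
    eq_inv_mul_iff_mul_eq₀ (by positivity)] at hscale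
  rw [← hscale, div_mul_eq_mul_div, mul_div_assoc, ← integral_div]
  congr with z
  rw [hsqrt, smul_eq_mul]
  field_simp

lemma integrableOn_inv_sqrt_one_sub_norm_sq :
    IntegrableOn (fun z : E => (√(1 - ‖z‖ ^ 2))⁻¹) (closedBall 0 1) μ := by
  rcases subsingleton_or_nontrivial E with hE | hE
  · exact continuous_of_const (fun _ _ => by simp [Subsingleton.elim _ (0 : E)])
      |>.continuousOn.integrableOn_compact (isCompact_closedBall 0 1)
  have hradial : IntegrableOn (fun r : ℝ => (√(1 - r ^ 2))⁻¹) (Ioo 0 1) :=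
    ((intervalIntegrable_iff.1
      Polynomial.Chebyshev.intervalIntegrable_sqrt_one_sub_sq_inv).congr_fun
        (fun r _ => Real.sqrt_inv _) measurableSet_uIoc).mono_set fun r hr => by
          rw [uIoc_of_le (by norm_num)]; exact ⟨by linarith [hr.1], hr.2.le⟩
  rw [← ball_union_sphere]
  refine .union ((integrableOn_fun_norm_addHaar μ (f := fun r => (√(1 - r ^ 2))⁻¹)).2 ?_)
    (.of_measure_zero (Measure.addHaar_sphere μ 0 1))
  exact hradial.continuousOn_mul_of_subset (by fun_prop) isCompact_Icc measurableSet_Ioo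
    Ioo_subset_Icc_self

variable {f f' : ℝ → ℝ} {h : E → ℝ}

lemma abelIntegral_add_mul (hf : Continuous f) (hh : Continuous h) (a b : ℝ) {s : ℝ}
    (hs : 0 < s) : abelIntegral μ (fun r => a + b * f r) h s =
      a * abelIntegral μ (fun _ => 1) h s + b * abelIntegral μ f h s := by
  have hint {k : E → ℝ} (hk : Continuous k) :
      IntegrableOn (fun z => (√(1 - ‖z‖ ^ 2))⁻¹ • k z) (closedBall 0 1) μ :=
    (integrableOn_inv_sqrt_one_sub_norm_sq μ).smul_continuousOn hk.continuousOn
      (isCompact_closedBall 0 1)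
  simp only [abelIntegral_eq_scaled μ _ _ hs]
  rw [mul_left_comm a, mul_left_comm b, ← mul_add]
  congr 1
  rw [← integral_const_mul, ← integral_const_mul,
    ← integral_add ((hint (by fun_prop)).const_mul a) ((hint (by fun_prop)).const_mul b)]
  congr with z
  simp only [smul_eq_mul]
  ring

lemma contDiffOn_abelIntegral_one {k : ℕ} (hh : ContDiff ℝ k h) :
    ContDiffOn ℝ k (abelIntegral μ (fun _ => 1) h) (Ioi 0) := by
  have hscaled := contDiff_setIntegral_smul (isCompact_closedBall 0 1)
    (integrableOn_inv_sqrt_one_sub_norm_sq μ) (G := fun p : ℝ × E => 1 * h (p.1 • p.2))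
    (contDiff_const.mul (hh.comp (contDiff_fst.smul contDiff_snd)))
  refine ContDiffOn.congr ?_ fun s hs => abelIntegral_eq_scaled μ _ _ hs
  exact ((contDiffOn_id.pow _).div contDiffOn_id fun s hs => ne_of_gt hs).mul hscaled.contDiffOn

lemma integrableOn_div_sqrt_sq_sub_norm_sq {T : ℝ} (hT : 0 ≤ T) :
    IntegrableOn (fun p : E × ℝ => p.2 / √(p.2 ^ 2 - ‖p.1‖ ^ 2))
      (closedBall 0 T ×ˢ Icc 0 T) (μ.prod volume) := by
  have hsection {z : E} (hz : z ∈ closedBall 0 T) :=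
    intervalIntegrable_div_sqrt_sq_sub_sq (norm_nonneg z) (mem_closedBall_zero_iff.1 hz)
  have hnorm : IntegrableOn (fun z : E => ∫ σ in Icc 0 T, ‖σ / √(σ ^ 2 - ‖z‖ ^ 2)‖)
      (closedBall 0 T) μ := by
    refine (ContinuousOn.integrableOn_compact (f := fun z : E => √(T ^ 2 - ‖z‖ ^ 2))
      (isCompact_closedBall 0 T) (by fun_prop)).congr_fun (fun z hz => ?_)
      measurableSet_closedBall
    beta_reduce
    rw [← integral_div_sqrt_mul_deriv_comp_sqrt (Φ := fun a => a) (Φ' := fun _ => 1) hasDerivAt_id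
      continuous_const rfl (norm_nonneg z) (mem_closedBall_zero_iff.1 hz),
      intervalIntegral.integral_of_le hT, ← integral_Icc_eq_integral_Ioc]
    refine setIntegral_congr_fun measurableSet_Icc fun σ hσ => ?_
    rw [mul_one, Real.norm_of_nonneg (div_nonneg hσ.1 (Real.sqrt_nonneg _))]
  have hmeas : Measurable fun p : E × ℝ => p.2 / √(p.2 ^ 2 - ‖p.1‖ ^ 2) := by fun_prop
  rw [IntegrableOn, ← Measure.prod_restrict, integrable_prod_iff hmeas.aestronglyMeasurable]
  exact ⟨ae_restrict_of_forall_mem measurableSet_closedBall fun z hz =>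
    (intervalIntegrable_iff_integrableOn_Icc_of_le hT).1 (hsection hz), hnorm⟩

lemma abelIntegral_mul_eq_integral (hf : ∀ a, HasDerivAt f (f' a) a) (hf' : Continuous f')
    (hf0 : f 0 = 0) (hh : Continuous h) {T : ℝ} (hT : 0 ≤ T) :
    abelIntegral μ (fun a => a * f a) h T = ∫ σ in 0..T, σ * abelIntegral μ f' h σ := by
  have hint : Integrable (Function.uncurry fun (z : E) (σ : ℝ) =>
      σ / √(σ ^ 2 - ‖z‖ ^ 2) * (f' √(σ ^ 2 - ‖z‖ ^ 2) * h z))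
      ((μ.restrict (closedBall 0 T)).prod (volume.restrict (Icc 0 T))) := by
    rw [Measure.prod_restrict]
    exact (integrableOn_div_sqrt_sq_sub_norm_sq μ hT).mul_continuousOn (by fun_prop)
      ((isCompact_closedBall 0 T).prod isCompact_Icc)
  calc abelIntegral μ (fun a => a * f a) h T
      = ∫ z in closedBall 0 T, (∫ σ in Icc 0 T,
          σ / √(σ ^ 2 - ‖z‖ ^ 2) * (f' √(σ ^ 2 - ‖z‖ ^ 2) * h z)) ∂μ := by
        refine setIntegral_congr_fun measurableSet_closedBall fun z hz => ?_
        simp only [← mul_assoc]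
        rw [integral_mul_const, integral_Icc_eq_integral_Ioc, ← intervalIntegral.integral_of_le hT,
          integral_div_sqrt_mul_deriv_comp_sqrt hf hf' hf0 (norm_nonneg z)
            (mem_closedBall_zero_iff.1 hz)]
        rcases eq_or_ne √(T ^ 2 - ‖z‖ ^ 2) 0 with h0 | h0
        · simp [h0, hf0]
        · rw [mul_div_cancel_left₀ _ h0]
    _ = ∫ σ in Icc 0 T, ∫ z in closedBall 0 T,
          σ / √(σ ^ 2 - ‖z‖ ^ 2) * (f' √(σ ^ 2 - ‖z‖ ^ 2) * h z) ∂μ := integral_integral_swap hint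
    _ = ∫ σ in 0..T, σ * abelIntegral μ f' h σ := by
        rw [integral_Icc_eq_integral_Ioc, intervalIntegral.integral_of_le hT]
        refine setIntegral_congr_fun measurableSet_Ioc fun σ hσ => ?_
        rw [abelIntegral_eq_setIntegral_of_le μ f' h hσ.1.le hσ.2, ← integral_const_mul]
        congr with z
        ring

lemma exists_continuous_eqOn_mul_abelIntegral (hf : Continuous f) (hh : Continuous h) :
    ∃ H : ℝ → ℝ, Continuous H ∧ EqOn (fun s => s * abelIntegral μ f h s) H (Ioi 0) := by
  refine ⟨fun s => s ^ Module.finrank ℝ E * ∫ z in closedBall 0 1,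
    (√(1 - ‖z‖ ^ 2))⁻¹ • (f (s * √(1 - ‖z‖ ^ 2)) * h (s • z)) ∂μ, ?_, fun s hs => ?_⟩
  · exact (continuous_pow _).mul (continuous_setIntegral_smul (isCompact_closedBall 0 1)
      (integrableOn_inv_sqrt_one_sub_norm_sq μ)
      (G := fun p : ℝ × E => f (p.1 * √(1 - ‖p.2‖ ^ 2)) * h (p.1 • p.2)) (by fun_prop))
  · beta_reduce
    rw [abelIntegral_eq_scaled μ f h hs, ← mul_assoc, mul_div_cancel₀ _ (ne_of_gt hs)]

lemma hasDerivAt_abelIntegral (hf : ∀ a, HasDerivAt f (f' a) a) (hf' : Continuous f')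
    (hf0 : f 0 = 0) (hh : Continuous h) {t : ℝ} (ht : 0 < t) :
    HasDerivAt (abelIntegral μ (fun a => a * f a) h) (t * abelIntegral μ f' h t) t := by
  obtain ⟨H, hH, hHeq⟩ := exists_continuous_eqOn_mul_abelIntegral μ hf' hh
  have hprimitive {s : ℝ} (hs : 0 < s) :
      abelIntegral μ (fun a => a * f a) h s = ∫ σ in 0..s, H σ := by
    rw [abelIntegral_mul_eq_integral μ hf hf' hf0 hh hs.le, intervalIntegral.integral_of_le hs.le,
      intervalIntegral.integral_of_le hs.le]
    exact setIntegral_congr_fun measurableSet_Ioc (hHeq.mono Ioc_subset_Ioi_self)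
  rw [show t * abelIntegral μ f' h t = H t from hHeq ht]
  exact (hH.integral_hasStrictDerivAt 0 t).hasDerivAt.congr_of_eventuallyEq
    (eventually_of_mem (Ioi_mem_nhds ht) fun s hs => hprimitive hs)

lemma iterOp_abelIntegral {Φ : ℕ → ℝ → ℝ} {a : ℕ → ℝ} {b : ℝ}
    (hΦ : ∀ ℓ r, HasDerivAt (Φ ℓ) (a (ℓ + 1) + b * (r * Φ (ℓ + 1) r)) r) (hΦ0 : ∀ ℓ, Φ ℓ 0 = 0)
    {m : ℕ} (hh : ContDiff ℝ m h) {t : ℝ} (ht : 0 < t) :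
    iterOp m (abelIntegral μ (fun r => a 0 + b * (r * Φ 0 r)) h) t =
      ∑ j ∈ Finset.range (m + 1), b ^ j * a j * iterOp (m - j) (abelIntegral μ (fun _ => 1) h) t +
        b ^ (m + 1) * abelIntegral μ (fun r => r * Φ m r) h t := by
  have hΦc (ℓ : ℕ) : Continuous (Φ ℓ) :=
    continuous_iff_continuousAt.2 fun r => (hΦ ℓ r).continuousAt
  refine iterOp_eq_sum_add (K := fun ℓ => abelIntegral μ (fun r => r * Φ ℓ r) h)
    (fun s hs => abelIntegral_add_mul μ (by fun_prop) hh.continuous _ _ hs) (fun ℓ s hs => ?_)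
    (contDiffOn_abelIntegral_one μ hh) ht
  rw [← abelIntegral_add_mul μ (by fun_prop) hh.continuous _ _ hs]
  exact hasDerivAt_abelIntegral μ (hΦ ℓ) (by fun_prop) (hΦ0 ℓ) hh.continuous hs

end AbelIntegral

section CoshKernel

variable {E : Type*} [NormedAddCommGroup E] [NormedSpace ℝ E] [FiniteDimensional ℝ E]
  [MeasurableSpace E] [BorelSpace E] (μ : Measure E) [μ.IsAddHaarMeasure] {m : ℕ}

lemma iterOp_abelIntegral_cosh {h : E → ℝ} (hh : ContDiff ℝ m h) {t : ℝ} (ht : 0 < t) :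
    iterOp m (abelIntegral μ (fun r => Real.cosh (1 / 2 * r)) h) t =
      ∑ j ∈ Finset.range (m + 1),
          1 / (8 ^ j * j !) * iterOp (m - j) (abelIntegral μ (fun _ => 1) h) t +
        (1 / 4) ^ (m + 1) * abelIntegral μ (fun r => r * (2 * kEven (m + 1) (1 / 2 * r))) h t := by
  let Φ (ℓ : ℕ) (r : ℝ) : ℝ := 2 * kEven (ℓ + 1) (1 / 2 * r)
  let a (ℓ : ℕ) : ℝ := 1 / (2 * ℓ)‼
  have hΦ (ℓ : ℕ) (r : ℝ) : HasDerivAt (Φ ℓ) (a (ℓ + 1) + 1 / 4 * (r * Φ (ℓ + 1) r)) r := by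
    refine (((hasDerivAt_kEven (ℓ + 1) (1 / 2 * r)).comp r
      ((hasDerivAt_id r).const_mul (1 / 2))).const_mul 2).congr_deriv ?_
    simp only [Φ, a]
    ring
  have hΦ0 (ℓ : ℕ) : Φ ℓ 0 = 0 := by simp [Φ, kEven_zero]
  have hcosh : (fun r => Real.cosh (1 / 2 * r)) = fun r => a 0 + 1 / 4 * (r * Φ 0 r) := by
    ext r
    simp only [cosh_eq_one_add_mul_kEven, Φ, a, Nat.doubleFactorial, zero_add]
    ring
  have hcoeff (j : ℕ) : (1 / 4 : ℝ) ^ j * a j = 1 / (8 ^ j * j !) := by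
    simp only [a, Nat.doubleFactorial_two_mul]
    rw [one_div_pow, one_div_mul_one_div, Nat.cast_mul, ← mul_assoc, Nat.cast_pow, ← mul_pow]
    norm_num
  rw [hcosh, iterOp_abelIntegral μ hΦ hΦ0 hh ht]
  simp only [hcoeff, Φ]

lemma iterOp_setIntegral_closedBall_cosh {g : E → ℝ} (hg : ContDiff ℝ m g) (x : E) {t : ℝ}
    (ht : 0 < t) :
    iterOp m (fun s => ∫ y in closedBall x s,
        Real.cosh (1 / 2 * √(s ^ 2 - ‖x - y‖ ^ 2)) / √(s ^ 2 - ‖x - y‖ ^ 2) * g y ∂μ) t =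
      1 / (2 * 4 ^ m) *
          ∫ y in closedBall x t, kEven (m + 1) (1 / 2 * √(t ^ 2 - ‖x - y‖ ^ 2)) * g y ∂μ +
        ∑ j ∈ Finset.range (m + 1), 1 / (8 ^ j * j !) *
          iterOp (m - j) (fun s => ∫ y in closedBall x s,
            1 / √(s ^ 2 - ‖x - y‖ ^ 2) * g y ∂μ) t := by
  have hh : ContDiff ℝ m fun z => g (x - z) := hg.comp (contDiff_const.sub contDiff_id)
  rw [setIntegral_closedBall_eq_abelIntegral μ (fun r => Real.cosh (1 / 2 * r)) g x,
    setIntegral_closedBall_eq_abelIntegral μ (fun _ => 1) g x, iterOp_abelIntegral_cosh μ hh ht,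
    ← setIntegral_closedBall_comp_sqrt_eq_abelIntegral μ (by simp [kEven_zero])]
  simp only [mul_assoc (2 : ℝ), integral_const_mul]
  rw [add_comm, one_div_pow]
  congr 1
  field

end CoshKernel

theorem nishihara_decomposition_even_general {n : ℕ} (hn : Even n) (hn0 : 0 < n)
    {g : EuclideanSpace ℝ (Fin n) → ℝ} (hg : ContDiff ℝ ((n - 2) / 2 : ℕ) g)
    (x : EuclideanSpace ℝ (Fin n)) {t : ℝ} (ht : 0 < t) :
    Sn n g x t = Jn n g x t + exp (-t / 2) * Wn n g x t := by
  obtain ⟨m, rfl⟩ : ∃ m, n = 2 * (m + 1) := by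
    obtain ⟨k, rfl⟩ := hn
    exact ⟨k - 1, by lia⟩
  have hm : (2 * (m + 1) - 2) / 2 = m := by lia
  rw [hm] at hg
  rw [Sn, Jn, Wn, hm, iterOp_setIntegral_closedBall_cosh volume hg x ht,
    show 2 * (m + 1) / 2 = m + 1 by lia, show 2 * (m + 1) - 2 = 2 * m by lia, pow_mul]
  ring

/-- Nishihara decomposition, even `n`:
`S_n(t)g(x) = J_n(t)g(x) + e^{-t/2} W_n(t)g(x)` for all `x` and `t > 0`. -/
theorem nishihara_decomposition_even (n : ℕ) (hn : Even n) (hn0 : 0 < n)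
    (g : EuclideanSpace ℝ (Fin n) → ℝ) (hg : ContDiff ℝ (⊤ : ℕ∞) g) :
    ∀ (x : EuclideanSpace ℝ (Fin n)) (t : ℝ), 0 < t →
      Sn n g x t = Jn n g x t + exp (-t / 2) * Wn n g x t := by
  exact fun x t ht =>
    nishihara_decomposition_even_general hn hn0 (hg.of_le (by exact_mod_cast le_top)) x ht
end
end

section
/- Let n ≥ 1 and let f : ℝⁿ → ℝ be a non-zero smooth function with compact support. There exists a positive constant C = C(n) such that for all x ∈ ℝⁿ and t > 0, |J̃_n(t)f(x)| ≤ C (1 + t)^{-n/2 - 1} ‖f‖_{L¹}. -/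
open Real Set Filter MeasureTheory Metric
open scoped Nat Topology

noncomputable section

/-- The modified Bessel function of integer order `ν`. -/
def besselI (ν : ℕ) (s : ℝ) : ℝ :=
  ∑' j : ℕ, (1 / ((j ! : ℝ) * ((j + ν)! : ℝ))) * (s / 2) ^ (2 * j + ν)

/-- Odd-dimensional kernel `k_ℓ(s) = 2^{-ℓ} Σ_j (1/(j!(j+ℓ)!))(s/2)^{2j} = I_ℓ(s)/s^ℓ`. -/
def kOdd (ℓ : ℕ) (s : ℝ) : ℝ :=
  (1 / 2 ^ ℓ) * ∑' j : ℕ, (1 / ((j ! : ℝ) * ((j + ℓ)! : ℝ))) * (s / 2) ^ (2 * j)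

/-- `c_n`: `1` for `n = 1`, `2^{-(n+1)/2}π^{-(n-1)/2}` for odd `n > 1`,
`2^{-(n+2)/2}π^{-n/2}` for even `n`. -/
def cn (n : ℕ) : ℝ :=
  if n = 1 then 1
  else if Odd n then (2 : ℝ) ^ (-((n : ℝ) + 1) / 2) * π ^ (-((n : ℝ) - 1) / 2)
  else (2 : ℝ) ^ (-((n : ℝ) + 2) / 2) * π ^ (-(n : ℝ) / 2)

/-- `J̃_n(t)f(x)`, defined case by case in the dimension `n`. -/
def Jtilde (n : ℕ) (f : EuclideanSpace ℝ (Fin n) → ℝ) (t : ℝ)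
    (x : EuclideanSpace ℝ (Fin n)) : ℝ :=
  if n = 1 then
    (exp (-t / 2) / 4) *
      ∫ y in closedBall x t,
        ((t / Real.sqrt (t ^ 2 - ‖x - y‖ ^ 2)) *
            besselI 1 ((1 / 2) * Real.sqrt (t ^ 2 - ‖x - y‖ ^ 2))
          - besselI 0 ((1 / 2) * Real.sqrt (t ^ 2 - ‖x - y‖ ^ 2))) * f y
  else if Odd n then
    (cn n * exp (-t / 2) / 2 ^ (n + 1)) *
      ∫ y in closedBall x t,
        (t * kOdd ((n + 1) / 2) ((1 / 2) * Real.sqrt (t ^ 2 - ‖x - y‖ ^ 2))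
          - 2 * kOdd ((n - 1) / 2) ((1 / 2) * Real.sqrt (t ^ 2 - ‖x - y‖ ^ 2))) * f y
  else
    (cn n * exp (-t / 2) / 2 ^ n) *
      ∫ y in closedBall x t,
        (t * kEven (n / 2 + 1) ((1 / 2) * Real.sqrt (t ^ 2 - ‖x - y‖ ^ 2))
          - 2 * kEven (n / 2) ((1 / 2) * Real.sqrt (t ^ 2 - ‖x - y‖ ^ 2))) * f y

/-! Up to a constant and the factor `exp (-t / 2)`, `J̃_n` has the kernel `t k_{m+1}(s) - 2 k_m(s)`
with `2 s = √(t² - r²)`. Split it as `(t - 2 s) k_{m+1}(s) - 2 (k_m(s) - s k_{m+1}(s))`.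
The leading terms of `k_m` and `s k_{m+1}` cancel in the last bracket, which gains one order of
decay and is bounded, like `k_{m+1}`, by `exp s * (1 + s) ^ (-n/2-1)`; the growing factor `t - 2 s`
is absorbed by `exp (s - t / 2)`.

In both parities the kernels are the series `∑ s^{2j+ε} / ((2(j+ℓ))‼ (2j+ε)‼)`, with `ε = 0` for
odd `n` and `ε = 1` for even `n`. Their three-term recurrence in `ℓ` reduces both asymptotic bounds
to `ℓ = 0`, where they are read off from Poisson's integral for `ε = 0` and from hyperbolic
functions for `ε = 1`. -/

section ExpWeight

open Asymptotics

/-- The comparison function `exp s * (1 + s) ^ (-r)` for the growth of a modified Bessel function on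
`[0, ∞)`. Asymptotic bounds are stated along `𝓟 (Ici 0)`, so that they are uniform in `s ≥ 0`. -/
def expWeight (r s : ℝ) : ℝ := exp s * (1 + s) ^ (-r)

lemma expWeight_nonneg (r : ℝ) {s : ℝ} (hs : 0 ≤ s) : 0 ≤ expWeight r s :=
  mul_nonneg (exp_nonneg s) (rpow_nonneg (by linarith) _)

lemma isBigO_Ici_zero_of_le {g h : ℝ → ℝ} (C : ℝ) (hg : ∀ s, 0 ≤ s → 0 ≤ g s)
    (hgh : ∀ s, 0 ≤ s → g s ≤ C * |h s|) : g =O[𝓟 (Ici 0)] h :=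
  isBigO_principal.2 ⟨C, fun s hs => by
    simpa only [norm_eq_abs, abs_of_nonneg (hg s hs)] using hgh s hs⟩

lemma one_add_rpow_isBigO_exp (p : ℝ) : (fun s : ℝ => (1 + s) ^ p) =O[𝓟 (Ici 0)] exp := by
  obtain ⟨N, hN⟩ := exists_nat_ge p
  refine isBigO_Ici_zero_of_le (N ! * exp 1) (fun s hs => by positivity) fun s hs => ?_
  calc (1 + s) ^ p ≤ (1 + s) ^ N := by
        rw [← rpow_natCast]
        exact rpow_le_rpow_of_exponent_le (by linarith) hN
    _ ≤ N ! * exp (1 + s) :=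
        (div_le_iff₀' (by positivity)).1 (pow_div_factorial_le_exp (1 + s) (by linarith) N)
    _ = N ! * exp 1 * |exp s| := by rw [exp_add, abs_exp, mul_assoc]

lemma one_add_rpow_isBigO_expWeight (p r : ℝ) :
    (fun s : ℝ => (1 + s) ^ p) =O[𝓟 (Ici 0)] expWeight r := by
  refine ((one_add_rpow_isBigO_exp (p + r)).mul
    (isBigO_refl (fun s : ℝ => (1 + s) ^ (-r)) _)).congr' ?_ .rfl
  refine eventually_principal.2 fun s (hs : 0 ≤ s) => ?_
  simp only [← rpow_add (by linarith : 0 < 1 + s), add_neg_cancel_right]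

lemma pow_isBigO_expWeight (m : ℕ) (r : ℝ) :
    (fun s : ℝ => s ^ m) =O[𝓟 (Ici 0)] expWeight r := by
  refine .trans ?_ (one_add_rpow_isBigO_expWeight m r)
  refine isBigO_Ici_zero_of_le 1 (fun s hs => by positivity) fun s hs => ?_
  rw [one_mul, rpow_natCast, abs_of_nonneg (by positivity)]
  gcongr
  linarith

lemma expWeight_isBigO_expWeight {r r' : ℝ} (h : r ≤ r') :
    expWeight r' =O[𝓟 (Ici 0)] expWeight r := by
  refine isBigO_Ici_zero_of_le 1 (fun s hs => expWeight_nonneg r' hs) fun s hs => ?_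
  rw [one_mul, abs_of_nonneg (expWeight_nonneg r hs)]
  exact mul_le_mul_of_nonneg_left (rpow_le_rpow_of_exponent_le (by linarith) (by linarith))
    (exp_nonneg s)

lemma isBigO_expWeight_add_one {g : ℝ → ℝ} {r : ℝ} (hg : g =O[𝓟 (Ici 0)] expWeight r)
    (hmul : (fun s => s * g s) =O[𝓟 (Ici 0)] expWeight r) :
    g =O[𝓟 (Ici 0)] expWeight (r + 1) := by
  refine ((hg.add hmul).mul (isBigO_refl (fun s : ℝ => (1 + s)⁻¹) _)).congr' ?_ ?_ <;>
    refine eventually_principal.2 fun s (hs : 0 ≤ s) => ?_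
  · field_simp
  · simp only [expWeight]
    rw [mul_assoc, ← rpow_neg_one, ← rpow_add (by linarith), neg_add]

lemma exists_one_add_mul_expWeight_le {p : ℝ} (hp : 0 ≤ p) :
    ∃ A > 0, ∀ s u : ℝ, 0 ≤ s → 0 ≤ u → (1 + u) * expWeight p s ≤ A * expWeight p (s + u) := by
  obtain ⟨A, hA, hexp⟩ := (one_add_rpow_isBigO_exp (p + 1)).exists_pos
  refine ⟨A, hA, fun s u hs hu => ?_⟩
  have hu_exp : (1 + u) ^ (p + 1) ≤ A * exp u := by
    simpa only [norm_eq_abs, abs_exp, abs_of_nonneg (rpow_nonneg (by linarith : 0 ≤ 1 + u) _)]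
      using isBigOWith_principal.1 hexp u hu
  have hs_rpow : (1 + s) ^ (-p) ≤ (1 + u) ^ p * (1 + (s + u)) ^ (-p) := by
    have hdiv : (1 + (s + u)) / (1 + u) ≤ 1 + s := by
      rw [div_le_iff₀ (by linarith)]
      nlinarith [mul_nonneg hs hu]
    calc (1 + s) ^ (-p) ≤ ((1 + (s + u)) / (1 + u)) ^ (-p) :=
          rpow_le_rpow_of_nonpos (by positivity) hdiv (by linarith)
      _ = (1 + u) ^ p * (1 + (s + u)) ^ (-p) := by
          rw [div_rpow (by positivity) (by positivity), rpow_neg (by positivity : 0 ≤ 1 + u),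
            div_inv_eq_mul, mul_comm]
  calc (1 + u) * expWeight p s
      ≤ (1 + u) * (exp s * ((1 + u) ^ p * (1 + (s + u)) ^ (-p))) := by
        unfold expWeight
        gcongr
    _ = (1 + u) ^ (p + 1) * (exp s * (1 + (s + u)) ^ (-p)) := by
        rw [rpow_add_one (by linarith)]
        ring
    _ ≤ A * exp u * (exp s * (1 + (s + u)) ^ (-p)) := by gcongr
    _ = A * expWeight p (s + u) := by
        rw [expWeight, exp_add]
        ring

lemma exp_neg_mul_expWeight_half_le {p t : ℝ} (hp : 0 ≤ p) (ht : 0 ≤ t) :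
    exp (-t / 2) * expWeight p (t / 2) ≤ 2 ^ p * (1 + t) ^ (-p) := by
  calc exp (-t / 2) * expWeight p (t / 2) = (1 + t / 2) ^ (-p) := by
        rw [expWeight, ← mul_assoc, ← exp_add, neg_div, neg_add_cancel, exp_zero, one_mul]
    _ ≤ ((1 + t) / 2) ^ (-p) :=
        rpow_le_rpow_of_nonpos (by positivity) (by linarith) (by linarith)
    _ = 2 ^ p * (1 + t) ^ (-p) := by
        rw [div_rpow (by positivity) zero_le_two, rpow_neg zero_le_two, div_inv_eq_mul, mul_comm]

end ExpWeight

section KernelSeries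

open Asymptotics

/-- The series `∑ s^{2j+ε} / ((2(j+ℓ))‼ (2j+ε)‼)`: for `ε = 0` this is `I_ℓ(s) / s^ℓ`, the kernel of
odd dimensions, and for `ε = 1` the kernel of even dimensions, a multiple of
`L_{ℓ-1/2}(s) / s^{ℓ-1/2}` with `L` the modified Struve function. -/
def kernelSeries (ε ℓ : ℕ) (s : ℝ) : ℝ :=
  ∑' j : ℕ, s ^ (2 * j + ε) / (((2 * (j + ℓ))‼ : ℝ) * ((2 * j + ε)‼ : ℝ))

lemma kEven_eq_kernelSeries (ℓ : ℕ) : kEven ℓ = kernelSeries 1 ℓ := rfl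

lemma kOdd_eq_kernelSeries (ℓ : ℕ) : kOdd ℓ = kernelSeries 0 ℓ := by
  ext s
  rw [kOdd, kernelSeries, ← tsum_mul_left]
  refine tsum_congr fun j => ?_
  rw [add_zero, Nat.doubleFactorial_two_mul, Nat.doubleFactorial_two_mul, div_pow]
  push_cast
  field_simp
  ring

lemma besselI_eq_pow_mul_kernelSeries (ν : ℕ) (s : ℝ) :
    besselI ν s = s ^ ν * kernelSeries 0 ν s := by
  rw [← kOdd_eq_kernelSeries, besselI, kOdd, ← mul_assoc, mul_one_div, ← div_pow,
    ← tsum_mul_left]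
  exact tsum_congr fun j => by ring

lemma hasSum_kernelSeries (ε ℓ : ℕ) (s : ℝ) :
    HasSum (fun j : ℕ => s ^ (2 * j + ε) / (((2 * (j + ℓ))‼ : ℝ) * ((2 * j + ε)‼ : ℝ)))
      (kernelSeries ε ℓ s) := by
  refine (Summable.of_norm_bounded ((summable_pow_div_factorial (s ^ 2)).mul_left (|s| ^ ε))
    fun j => ?_).hasSum
  have hfact : (j ! : ℝ) ≤ (2 * (j + ℓ))‼ * (2 * j + ε)‼ := by
    have : j ! ≤ (2 * (j + ℓ))‼ * (2 * j + ε)‼ := calc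
      j ! ≤ (j + ℓ)! := Nat.factorial_le (Nat.le_add_right j ℓ)
      _ ≤ 2 ^ (j + ℓ) * (j + ℓ)! := Nat.le_mul_of_pos_left _ (by positivity)
      _ = (2 * (j + ℓ))‼ := (Nat.doubleFactorial_two_mul _).symm
      _ ≤ (2 * (j + ℓ))‼ * (2 * j + ε)‼ := Nat.le_mul_of_pos_right _ (by positivity)
    exact_mod_cast this
  rw [norm_div, norm_pow, norm_eq_abs, norm_of_nonneg (by positivity), ← sq_abs, ← pow_mul,
    mul_div_assoc', ← pow_add, add_comm ε]
  gcongr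

lemma kernelSeries_nonneg (ε ℓ : ℕ) {s : ℝ} (hs : 0 ≤ s) : 0 ≤ kernelSeries ε ℓ s :=
  tsum_nonneg fun j => by positivity

lemma kernelSeries_succ_le (ε ℓ : ℕ) {s : ℝ} (hs : 0 ≤ s) :
    kernelSeries ε (ℓ + 1) s ≤ kernelSeries ε ℓ s := by
  refine hasSum_le (fun j => ?_) (hasSum_kernelSeries ε (ℓ + 1) s) (hasSum_kernelSeries ε ℓ s)
  have hdf : (2 * (j + ℓ))‼ ≤ (2 * (j + (ℓ + 1)))‼ := by
    rw [show 2 * (j + (ℓ + 1)) = 2 * (j + ℓ) + 2 by ring, Nat.doubleFactorial_add_two]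
    exact Nat.le_mul_of_pos_left _ (by positivity)
  gcongr

lemma kernelSeries_recurrence (ε ℓ : ℕ) (s : ℝ) :
    kernelSeries ε ℓ s = s ^ 2 * kernelSeries ε (ℓ + 2) s +
      (2 * ℓ + 2 - ε) * kernelSeries ε (ℓ + 1) s + ε / ((2 * (ℓ + 1))‼ * ε‼) * s ^ ε := by
  have hdiff := (hasSum_kernelSeries ε ℓ s).sub
    ((hasSum_kernelSeries ε (ℓ + 1) s).mul_left (2 * ℓ + 2 - ε : ℝ))
  -- `2 (j + ℓ + 1) - (2 ℓ + 2 - ε) = 2 j + ε`, which for `j ≥ 1` shortens `(2 j + ε)‼`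
  have hterm (j : ℕ) : s ^ (2 * j + ε) / (((2 * (j + ℓ))‼ : ℝ) * ((2 * j + ε)‼ : ℝ)) -
      (2 * ℓ + 2 - ε) * (s ^ (2 * j + ε) / (((2 * (j + (ℓ + 1)))‼ : ℝ) * ((2 * j + ε)‼ : ℝ))) =
      (2 * j + ε) * (s ^ (2 * j + ε) / (((2 * (j + (ℓ + 1)))‼ : ℝ) * ((2 * j + ε)‼ : ℝ))) := by
    rw [show 2 * (j + (ℓ + 1)) = 2 * (j + ℓ) + 2 by ring, Nat.doubleFactorial_add_two]
    push_cast
    field_simp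
    ring
  have hshift (j : ℕ) : (2 * (j + 1 : ℕ) + ε : ℝ) * (s ^ (2 * (j + 1) + ε) /
        (((2 * (j + 1 + (ℓ + 1)))‼ : ℝ) * ((2 * (j + 1) + ε)‼ : ℝ))) =
      s ^ 2 * (s ^ (2 * j + ε) / (((2 * (j + (ℓ + 2)))‼ : ℝ) * ((2 * j + ε)‼ : ℝ))) := by
    rw [show 2 * (j + 1) + ε = 2 * j + ε + 2 by ring, Nat.doubleFactorial_add_two,
      show j + 1 + (ℓ + 1) = j + (ℓ + 2) by ring]
    push_cast
    field_simp
    ring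
  simp only [hterm] at hdiff
  have htail := (hasSum_nat_add_iff' 1).2 hdiff
  simp only [hshift, Finset.sum_range_one] at htail
  have hsum := htail.unique ((hasSum_kernelSeries ε (ℓ + 2) s).mul_left (s ^ 2))
  simp only [Nat.cast_zero, mul_zero, zero_add] at hsum
  rw [← hsum]
  ring

lemma kernelSeries_isBigO_of_zero {ε : ℕ} {q : ℝ}
    (hbase : kernelSeries ε 0 =O[𝓟 (Ici 0)] expWeight q)
    (hbase_sub : (fun s => kernelSeries ε 0 s - s * kernelSeries ε 1 s) =O[𝓟 (Ici 0)]
      expWeight (q + 1)) (ℓ : ℕ) :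
    kernelSeries ε ℓ =O[𝓟 (Ici 0)] expWeight (q + ℓ) ∧
    (fun s => kernelSeries ε ℓ s - s * kernelSeries ε (ℓ + 1) s) =O[𝓟 (Ici 0)]
      expWeight (q + ℓ + 1) := by
  have hsucc (ℓ : ℕ) : kernelSeries ε (ℓ + 1) =O[𝓟 (Ici 0)] kernelSeries ε ℓ :=
    isBigO_Ici_zero_of_le 1 (fun s hs => kernelSeries_nonneg ε _ hs) fun s hs => by
      rw [one_mul, abs_of_nonneg (kernelSeries_nonneg ε ℓ hs)]
      exact kernelSeries_succ_le ε ℓ hs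
  induction ℓ with
  | zero => simpa only [Nat.cast_zero, add_zero] using And.intro hbase hbase_sub
  | succ ℓ ih =>
    obtain ⟨ih, ih_sub⟩ := ih
    have ih_sub' := ih_sub.trans (expWeight_isBigO_expWeight (by linarith : q + ℓ ≤ q + ℓ + 1))
    have hmul : (fun s => s * kernelSeries ε (ℓ + 1) s) =O[𝓟 (Ici 0)] expWeight (q + ℓ) :=
      (ih.sub ih_sub').congr_left fun s => by ring
    have hk : kernelSeries ε (ℓ + 1) =O[𝓟 (Ici 0)] expWeight (q + ℓ + 1) :=
      isBigO_expWeight_add_one ((hsucc ℓ).trans ih) hmul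
    -- the recurrence reads
    -- `s (k_{ℓ+1} - s k_{ℓ+2}) = (2ℓ+2-ε) k_{ℓ+1} - (k_ℓ - s k_{ℓ+1}) + c s^ε`
    have hmul_sub : (fun s => s * (kernelSeries ε (ℓ + 1) s - s * kernelSeries ε (ℓ + 2) s))
        =O[𝓟 (Ici 0)] expWeight (q + ℓ + 1) := by
      refine (((hk.const_mul_left (2 * ℓ + 2 - ε : ℝ)).sub ih_sub).add
        ((pow_isBigO_expWeight ε _).const_mul_left
          (ε / ((2 * (ℓ + 1))‼ * ε‼) : ℝ))).congr_left fun s => ?_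
      rw [kernelSeries_recurrence ε ℓ s]
      ring
    have hmul_succ : (fun s => s * kernelSeries ε (ℓ + 2) s) =O[𝓟 (Ici 0)]
        expWeight (q + ℓ + 1) := by
      refine isBigO_expWeight_add_one
        (((isBigO_refl (fun s : ℝ => s) _).mul (hsucc (ℓ + 1))).trans hmul) ?_
      exact (hmul.sub (hmul_sub.trans
        (expWeight_isBigO_expWeight (by linarith)))).congr_left fun s => by ring
    rw [Nat.cast_succ, ← add_assoc]
    exact ⟨hk, isBigO_expWeight_add_one (hk.sub hmul_succ) hmul_sub⟩

end KernelSeries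

section Hyperbolic

open Asymptotics

lemma kernelSeries_one_zero (s : ℝ) : kernelSeries 1 0 s = sinh s := by
  rw [sinh_eq_tsum, kernelSeries]
  refine tsum_congr fun j => ?_
  rw [Nat.factorial_eq_mul_doubleFactorial, add_zero, Nat.cast_mul, mul_comm ((2 * j)‼ : ℝ)]

lemma mul_kernelSeries_one_one (s : ℝ) : s * kernelSeries 1 1 s = cosh s - 1 := by
  rw [cosh_eq_tsum, (hasSum_cosh s).summable.tsum_eq_zero_add, kernelSeries, ← tsum_mul_left,
    mul_zero, pow_zero, Nat.factorial_zero, Nat.cast_one, div_one, add_sub_cancel_left]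
  refine tsum_congr fun j => ?_
  rw [mul_add_one 2 j, Nat.factorial_eq_mul_doubleFactorial]
  push_cast
  ring

lemma kernelSeries_one_zero_isBigO : kernelSeries 1 0 =O[𝓟 (Ici 0)] expWeight 0 := by
  refine isBigO_Ici_zero_of_le 1 (fun s hs => kernelSeries_nonneg 1 0 hs) fun s _ => ?_
  rw [kernelSeries_one_zero, expWeight, neg_zero, rpow_zero, mul_one, one_mul, abs_exp, sinh_eq]
  linarith [exp_pos s, exp_pos (-s)]

lemma kernelSeries_one_zero_sub_isBigO :
    (fun s => kernelSeries 1 0 s - s * kernelSeries 1 1 s) =O[𝓟 (Ici 0)] expWeight 1 := by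
  have hsub (s : ℝ) : kernelSeries 1 0 s - s * kernelSeries 1 1 s = 1 - exp (-s) := by
    rw [kernelSeries_one_zero, mul_kernelSeries_one_one, ← cosh_sub_sinh]
    ring
  simp only [hsub]
  refine .trans ?_ (pow_isBigO_expWeight 0 1)
  refine isBigO_Ici_zero_of_le 1 (fun s hs => ?_) fun s _ => ?_
  · linarith [exp_le_one_iff.2 (neg_nonpos.2 hs)]
  · simpa using exp_nonneg (-s)

end Hyperbolic

section Poisson

open Asymptotics

lemma hasSum_integral_pow_mul_exp {u : ℝ → ℝ} (hu : Continuous u) (i : ℕ) (a b s : ℝ) :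
    HasSum (fun m : ℕ => s ^ m / m ! * ∫ θ in a..b, u θ ^ (m + i))
      (∫ θ in a..b, u θ ^ i * exp (s * u θ)) := by
  have hexp (x : ℝ) : HasSum (fun m : ℕ => x ^ m / m !) (exp x) :=
    exp_eq_exp_ℝ ▸ NormedSpace.expSeries_div_hasSum_exp x
  simp only [← intervalIntegral.integral_const_mul]
  refine intervalIntegral.hasSum_integral_of_dominated_convergence
    (fun m θ => |u θ| ^ i * (|s * u θ| ^ m / m !)) (fun m => by fun_prop)
    (fun m => .of_forall fun θ _ => ?_) (.of_forall fun θ _ => ?_) ?_ (.of_forall fun θ _ => ?_)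
  · rw [norm_eq_abs, abs_mul, abs_div, abs_pow, abs_pow, Nat.abs_cast, abs_mul]
    exact le_of_eq (by ring)
  · exact (summable_pow_div_factorial _).mul_left _
  · simp only [tsum_mul_left, (hexp _).tsum_eq]
    exact Continuous.intervalIntegrable (by fun_prop) _ _
  · refine ((hexp (s * u θ)).mul_left (u θ ^ i)).congr_fun fun m => ?_
    ring

lemma integral_cos_pow_add_two (m : ℕ) :
    ∫ θ in (0 : ℝ)..π, cos θ ^ (m + 2) = (m + 1) / (m + 2) * ∫ θ in (0 : ℝ)..π, cos θ ^ m := by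
  simp [integral_cos_pow]

lemma integral_cos_pow_two_mul (j : ℕ) :
    ∫ θ in (0 : ℝ)..π, cos θ ^ (2 * j) = π * ((2 * j)! / (2 * j)‼ ^ 2) := by
  induction j with
  | zero => simp
  | succ j ih =>
    rw [mul_add_one, integral_cos_pow_add_two, ih, Nat.doubleFactorial_add_two,
      Nat.factorial_succ, Nat.factorial_succ]
    push_cast
    field_simp
    ring

lemma integral_cos_pow_two_mul_add_one (j : ℕ) :
    ∫ θ in (0 : ℝ)..π, cos θ ^ (2 * j + 1) = 0 := by
  induction j with
  | zero => simp
  | succ j ih => rw [show 2 * (j + 1) + 1 = 2 * j + 1 + 2 by ring, integral_cos_pow_add_two, ih,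
      mul_zero]

lemma pi_mul_kernelSeries_zero_zero (s : ℝ) :
    π * kernelSeries 0 0 s = ∫ θ in (0 : ℝ)..π, exp (s * cos θ) := by
  have hsum := hasSum_integral_pow_mul_exp continuous_cos 0 0 π s
  simp only [add_zero, pow_zero, one_mul] at hsum
  rw [← (mul_right_injective₀ two_ne_zero).hasSum_iff] at hsum
  · refine ((hasSum_kernelSeries 0 0 s).mul_left π).unique (hsum.congr_fun fun j => ?_)
    rw [Function.comp_apply, integral_cos_pow_two_mul, add_zero, add_zero]
    field_simp
  · intro m hm
    obtain ⟨j, rfl | rfl⟩ := m.even_or_odd'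
    · exact absurd (mem_range_self j) hm
    · rw [integral_cos_pow_two_mul_add_one, mul_zero]

lemma pi_mul_kernelSeries_zero_one (s : ℝ) :
    π * (s * kernelSeries 0 1 s) = ∫ θ in (0 : ℝ)..π, cos θ * exp (s * cos θ) := by
  have hsum := hasSum_integral_pow_mul_exp continuous_cos 1 0 π s
  simp only [pow_one] at hsum
  have hinj : Function.Injective fun j : ℕ => 2 * j + 1 := fun i j hij => by grind
  rw [← hinj.hasSum_iff] at hsum
  · refine (((hasSum_kernelSeries 0 1 s).mul_left s).mul_left π).unique
      (hsum.congr_fun fun j => ?_)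
    rw [Function.comp_apply, show 2 * j + 1 + 1 = 2 * (j + 1) by ring, integral_cos_pow_two_mul,
      add_zero, mul_add_one, Nat.factorial_succ (2 * j + 1), Nat.doubleFactorial_add_two]
    push_cast
    field_simp
    ring
  · intro m hm
    obtain ⟨j, rfl | rfl⟩ := m.even_or_odd'
    · rw [integral_cos_pow_two_mul_add_one, mul_zero]
    · exact absurd (mem_range_self j) hm

/-- Poisson's integral for `I₀`, weighted by `(1 - cos θ) ^ m`; each factor `1 - cos θ` vanishes
at the maximum `θ = 0` of the exponent and gains one order of decay. -/
def poissonMoment (m : ℕ) (s : ℝ) : ℝ := ∫ θ in (0 : ℝ)..π, (1 - cos θ) ^ m * exp (s * cos θ)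

lemma one_sub_cos_pow_mul_exp_le (m : ℕ) {s θ : ℝ} (hs : 0 ≤ s) (hθ : |θ| ≤ π) :
    (1 - cos θ) ^ m * exp (s * cos θ) ≤
      m ! * (2 / (1 + s)) ^ m * exp (s + 2) * exp (-((1 + s) / π ^ 2) * θ ^ 2) := by
  set x := (1 + s) * (1 - cos θ) / 2 with hx
  have hx_nonneg : 0 ≤ x := by have := cos_le_one θ; rw [hx]; positivity
  have hpow : (1 - cos θ) ^ m ≤ m ! * (2 / (1 + s)) ^ m * exp x := by
    have hfact := (div_le_iff₀' (by positivity)).1 (pow_div_factorial_le_exp x hx_nonneg m)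
    calc (1 - cos θ) ^ m = (2 / (1 + s)) ^ m * x ^ m := by
          rw [← mul_pow, hx]
          field_simp
      _ ≤ (2 / (1 + s)) ^ m * (m ! * exp x) := by gcongr
      _ = m ! * (2 / (1 + s)) ^ m * exp x := by ring
  have hexp : x + s * cos θ ≤ s + 2 + -((1 + s) / π ^ 2) * θ ^ 2 := by
    have hquad := mul_le_mul_of_nonneg_left (cos_le_one_sub_mul_cos_sq hθ)
      (by linarith : 0 ≤ (1 + s) / 2)
    have : (1 + s) / 2 * (1 - 2 / π ^ 2 * θ ^ 2) =
      (1 + s) / 2 - (1 + s) / π ^ 2 * θ ^ 2 := by ring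
    rw [hx]
    linarith [neg_one_le_cos θ]
  calc (1 - cos θ) ^ m * exp (s * cos θ)
      ≤ m ! * (2 / (1 + s)) ^ m * exp x * exp (s * cos θ) := by gcongr
    _ = m ! * (2 / (1 + s)) ^ m * exp (x + s * cos θ) := by rw [exp_add]; ring
    _ ≤ m ! * (2 / (1 + s)) ^ m * exp (s + 2 + -((1 + s) / π ^ 2) * θ ^ 2) := by gcongr
    _ = _ := by rw [exp_add, ← mul_assoc]

lemma intervalIntegral_gaussian_le {a b c : ℝ} (hab : a ≤ b) (hc : 0 < c) :
    ∫ θ in a..b, exp (-c * θ ^ 2) ≤ √(π / c) := by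
  rw [intervalIntegral.integral_of_le hab, ← integral_gaussian c]
  exact setIntegral_le_integral (integrable_exp_neg_mul_sq hc) (.of_forall fun θ => exp_nonneg _)

lemma poissonMoment_isBigO (m : ℕ) : poissonMoment m =O[𝓟 (Ici 0)] expWeight (m + 1 / 2) := by
  refine isBigO_Ici_zero_of_le (m ! * 2 ^ m * exp 2 * √(π ^ 3)) (fun s _ => ?_) fun s hs => ?_
  · refine intervalIntegral.integral_nonneg pi_nonneg fun θ _ => ?_
    exact mul_nonneg (pow_nonneg (sub_nonneg.2 (cos_le_one θ)) m) (exp_nonneg _)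
  calc poissonMoment m s
      ≤ ∫ θ in (0 : ℝ)..π,
          m ! * (2 / (1 + s)) ^ m * exp (s + 2) * exp (-((1 + s) / π ^ 2) * θ ^ 2) := by
        refine intervalIntegral.integral_mono_on pi_nonneg
          (Continuous.intervalIntegrable (by fun_prop) _ _)
          (Continuous.intervalIntegrable (by fun_prop) _ _) fun θ hθ => ?_
        exact one_sub_cos_pow_mul_exp_le m hs (abs_le.2 ⟨by linarith [hθ.1, pi_pos], hθ.2⟩)
    _ ≤ m ! * (2 / (1 + s)) ^ m * exp (s + 2) * √(π / ((1 + s) / π ^ 2)) := by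
        rw [intervalIntegral.integral_const_mul]
        gcongr
        exact intervalIntegral_gaussian_le pi_nonneg (by positivity)
    _ = m ! * 2 ^ m * exp 2 * √(π ^ 3) * |expWeight (m + 1 / 2) s| := by
        rw [abs_of_nonneg (expWeight_nonneg _ hs), expWeight, neg_add, rpow_add (by positivity),
          rpow_neg (by positivity), rpow_neg (by positivity), rpow_natCast, ← sqrt_eq_rpow,
          div_div_eq_mul_div, ← pow_succ', sqrt_div (by positivity), div_pow, exp_add]
        ring

lemma kernelSeries_zero_zero_isBigO : kernelSeries 0 0 =O[𝓟 (Ici 0)] expWeight (1 / 2) := by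
  have hmoment := (poissonMoment_isBigO 0).const_mul_left π⁻¹
  rw [Nat.cast_zero, zero_add] at hmoment
  refine hmoment.congr_left fun s => ?_
  rw [poissonMoment, inv_mul_eq_iff_eq_mul₀ pi_ne_zero, pi_mul_kernelSeries_zero_zero]
  simp only [pow_zero, one_mul]

lemma kernelSeries_zero_zero_sub_isBigO :
    (fun s => kernelSeries 0 0 s - s * kernelSeries 0 1 s) =O[𝓟 (Ici 0)]
      expWeight (1 / 2 + 1) := by
  have hmoment := (poissonMoment_isBigO 1).const_mul_left π⁻¹
  rw [Nat.cast_one, add_comm] at hmoment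
  refine hmoment.congr_left fun s => ?_
  rw [poissonMoment, inv_mul_eq_iff_eq_mul₀ pi_ne_zero, mul_sub, pi_mul_kernelSeries_zero_zero,
    pi_mul_kernelSeries_zero_one, ← intervalIntegral.integral_sub
      (Continuous.intervalIntegrable (by fun_prop) _ _)
      (Continuous.intervalIntegrable (by fun_prop) _ _)]
  simp only [pow_one, sub_mul, one_mul]

end Poisson

open Asymptotics in
lemma kernelSeries_isBigO {ε : ℕ} (hε : ε ≤ 1) (ℓ : ℕ) :
    kernelSeries ε ℓ =O[𝓟 (Ici 0)] expWeight ((1 - ε) / 2 + ℓ) ∧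
    (fun s => kernelSeries ε ℓ s - s * kernelSeries ε (ℓ + 1) s) =O[𝓟 (Ici 0)]
      expWeight ((1 - ε) / 2 + ℓ + 1) := by
  obtain rfl | rfl := Nat.le_one_iff_eq_zero_or_eq_one.1 hε
  · rw [Nat.cast_zero, sub_zero]
    exact kernelSeries_isBigO_of_zero kernelSeries_zero_zero_isBigO
      kernelSeries_zero_zero_sub_isBigO ℓ
  · rw [Nat.cast_one, sub_self, zero_div]
    refine kernelSeries_isBigO_of_zero kernelSeries_one_zero_isBigO ?_ ℓ
    rw [zero_add]
    exact kernelSeries_one_zero_sub_isBigO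

section LightCone

open Asymptotics

lemma exists_exp_mul_abs_kernel_le {k₀ k₁ : ℝ → ℝ} {p : ℝ} (hp : 0 ≤ p)
    (hk₁ : k₁ =O[𝓟 (Ici 0)] expWeight p)
    (hsub : (fun s => k₀ s - s * k₁ s) =O[𝓟 (Ici 0)] expWeight p) :
    ∃ C > 0, ∀ s t, 0 ≤ s → s ≤ t / 2 →
      exp (-t / 2) * |t * k₁ s - 2 * k₀ s| ≤ C * (1 + t) ^ (-p) := by
  obtain ⟨C₁, hC₁, hk₁⟩ := hk₁.exists_pos
  obtain ⟨C₀, hC₀, hsub⟩ := hsub.exists_pos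
  obtain ⟨A, hA, habsorb⟩ := exists_one_add_mul_expWeight_le hp
  refine ⟨2 * (C₁ + C₀) * A * 2 ^ p, by positivity, fun s t hs hst => ?_⟩
  have hw := expWeight_nonneg p hs
  have hk₁s := isBigOWith_principal.1 hk₁ s hs
  have hsubs := isBigOWith_principal.1 hsub s hs
  simp only [norm_eq_abs, abs_of_nonneg hw] at hk₁s hsubs
  have hu : 0 ≤ t / 2 - s := by linarith
  have hkernel : |t * k₁ s - 2 * k₀ s| ≤ 2 * (C₁ + C₀) * (A * expWeight p (t / 2)) := calc
    |t * k₁ s - 2 * k₀ s| = |2 * (t / 2 - s) * k₁ s - 2 * (k₀ s - s * k₁ s)| := by ring_nf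
    _ ≤ 2 * (t / 2 - s) * |k₁ s| + 2 * |k₀ s - s * k₁ s| := by
        refine (abs_sub _ _).trans_eq ?_
        rw [abs_mul, abs_mul (2 : ℝ) (k₀ s - _), abs_two,
          abs_of_nonneg (mul_nonneg zero_le_two hu)]
    _ ≤ 2 * (t / 2 - s) * (C₁ * expWeight p s) + 2 * (C₀ * expWeight p s) := by gcongr
    _ ≤ 2 * (C₁ + C₀) * ((1 + (t / 2 - s)) * expWeight p s) := by
        have : 0 ≤ C₁ * expWeight p s + C₀ * ((t / 2 - s) * expWeight p s) := by positivity
        linarith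
    _ ≤ 2 * (C₁ + C₀) * (A * expWeight p (t / 2)) := by
        refine mul_le_mul_of_nonneg_left ?_ (by positivity)
        simpa only [add_sub_cancel] using habsorb s (t / 2 - s) hs hu
  calc exp (-t / 2) * |t * k₁ s - 2 * k₀ s|
      ≤ exp (-t / 2) * (2 * (C₁ + C₀) * (A * expWeight p (t / 2))) := by gcongr
    _ = 2 * (C₁ + C₀) * A * (exp (-t / 2) * expWeight p (t / 2)) := by ring
    _ ≤ 2 * (C₁ + C₀) * A * (2 ^ p * (1 + t) ^ (-p)) := by
        refine mul_le_mul_of_nonneg_left ?_ (by positivity)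
        exact exp_neg_mul_expWeight_half_le hp (by linarith)
    _ = 2 * (C₁ + C₀) * A * 2 ^ p * (1 + t) ^ (-p) := by ring

variable {E : Type*} [SeminormedAddCommGroup E] [MeasurableSpace E]

/-- The integral operator with kernel `t k₁(s) - 2 k₀(s)`, `2 s = √(t² - |x - y|²)`, on the ball of
radius `t` around `x`; it is `J̃_n` without its scalar prefactor. -/
def coneIntegral (μ : Measure E) (k₀ k₁ : ℝ → ℝ) (f : E → ℝ) (t : ℝ) (x : E) : ℝ :=
  ∫ y in closedBall x t, (t * k₁ (1 / 2 * √(t ^ 2 - ‖x - y‖ ^ 2)) -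
    2 * k₀ (1 / 2 * √(t ^ 2 - ‖x - y‖ ^ 2))) * f y ∂μ

lemma half_sqrt_sq_sub_sq_le {t : ℝ} (ht : 0 ≤ t) (r : ℝ) : 1 / 2 * √(t ^ 2 - r ^ 2) ≤ t / 2 := by
  have : √(t ^ 2 - r ^ 2) ≤ t := sqrt_le_iff.2 ⟨ht, sub_le_self _ (sq_nonneg r)⟩
  linarith

lemma abs_setIntegral_mul_le {α : Type*} [MeasurableSpace α] {μ : Measure α} {S : Set α}
    (hS : MeasurableSet S) {f K : α → ℝ} (hf : Integrable f μ) {M : ℝ} (hM : 0 ≤ M)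
    (hK : ∀ y ∈ S, |K y| ≤ M) :
    |∫ y in S, K y * f y ∂μ| ≤ M * ∫ y, |f y| ∂μ := by
  have hbound := hf.abs.const_mul M
  calc |∫ y in S, K y * f y ∂μ| ≤ ∫ y in S, M * |f y| ∂μ := by
        rw [← norm_eq_abs]
        refine norm_integral_le_of_norm_le hbound.restrict
          (ae_restrict_of_forall_mem hS fun y hy => ?_)
        rw [norm_mul]
        exact mul_le_mul_of_nonneg_right (hK y hy) (abs_nonneg _)
    _ ≤ ∫ y, M * |f y| ∂μ :=
        setIntegral_le_integral hbound (.of_forall fun y => by positivity)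
    _ = M * ∫ y, |f y| ∂μ := integral_const_mul M _

lemma exists_exp_mul_abs_coneIntegral_le [OpensMeasurableSpace E] (μ : Measure E)
    {k₀ k₁ : ℝ → ℝ} {p : ℝ} (hp : 0 ≤ p) (hk₁ : k₁ =O[𝓟 (Ici 0)] expWeight p)
    (hsub : (fun s => k₀ s - s * k₁ s) =O[𝓟 (Ici 0)] expWeight p) :
    ∃ C > 0, ∀ f, Integrable f μ → ∀ x t, 0 ≤ t →
      exp (-t / 2) * |coneIntegral μ k₀ k₁ f t x| ≤ C * (1 + t) ^ (-p) * ∫ y, |f y| ∂μ := by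
  obtain ⟨C, hC, hkernel⟩ := exists_exp_mul_abs_kernel_le hp hk₁ hsub
  refine ⟨C, hC, fun f hf x t ht => ?_⟩
  rw [← abs_exp, ← abs_mul, coneIntegral, ← integral_const_mul]
  simp only [← mul_assoc]
  refine abs_setIntegral_mul_le measurableSet_closedBall hf (by positivity) fun y _ => ?_
  rw [abs_mul, abs_exp]
  exact hkernel _ t (by positivity) (half_sqrt_sq_sub_sq_le ht _)

end LightCone

section Jtilde

lemma div_mul_besselI_one_sub_besselI_zero {σ : ℝ} (hσ : σ ≠ 0) (t : ℝ) :
    t / σ * besselI 1 (1 / 2 * σ) - besselI 0 (1 / 2 * σ) =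
      1 / 2 * (t * kernelSeries 0 1 (1 / 2 * σ) - 2 * kernelSeries 0 0 (1 / 2 * σ)) := by
  rw [besselI_eq_pow_mul_kernelSeries, besselI_eq_pow_mul_kernelSeries]
  field_simp

/-- The division by `√(t² - r²)` in the one-dimensional kernel degenerates only on the sphere
`r = t`, a null set. -/
lemma Jtilde_one (f : EuclideanSpace ℝ (Fin 1) → ℝ) (t : ℝ) (x : EuclideanSpace ℝ (Fin 1)) :
    Jtilde 1 f t x =
      1 / 8 * exp (-t / 2) * coneIntegral volume (kernelSeries 0 0) (kernelSeries 0 1) f t x := by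
  rw [Jtilde, if_pos rfl, show 1 / 8 * exp (-t / 2) = exp (-t / 2) / 4 * (1 / 2) by ring,
    mul_assoc, coneIntegral, ← integral_const_mul (1 / 2 : ℝ)]
  congr 1
  have hsphere : ∀ᵐ y ∂(volume : Measure (EuclideanSpace ℝ (Fin 1))), y ∉ sphere x t :=
    measure_eq_zero_iff_ae_notMem.1 (Measure.addHaar_sphere _ x t)
  refine setIntegral_congr_ae measurableSet_closedBall (hsphere.mono fun y hy hball => ?_)
  have hlt : ‖x - y‖ < t := by
    rw [← dist_eq_norm, dist_comm]
    exact (mem_closedBall.1 hball).lt_of_ne hy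
  have hpos : 0 < t ^ 2 - ‖x - y‖ ^ 2 :=
    sub_pos.2 (pow_lt_pow_left₀ hlt (norm_nonneg _) two_ne_zero)
  rw [div_mul_besselI_one_sub_besselI_zero (sqrt_ne_zero'.2 hpos), mul_assoc]

lemma exists_Jtilde_eq_coneIntegral (n : ℕ) : ∃ (c : ℝ) (ε m : ℕ), ε ≤ 1 ∧ n + ε = 2 * m + 1 ∧
    ∀ f t x, Jtilde n f t x = c * exp (-t / 2) *
      coneIntegral volume (kernelSeries ε m) (kernelSeries ε (m + 1)) f t x := by
  obtain rfl | hn := eq_or_ne n 1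
  · exact ⟨1 / 8, 0, 0, zero_le_one, rfl, Jtilde_one⟩
  obtain ⟨m, rfl | rfl⟩ := n.even_or_odd'
  · refine ⟨cn (2 * m) / 2 ^ (2 * m), 1, m, le_rfl, rfl, fun f t x => ?_⟩
    rw [Jtilde, if_neg hn, if_neg (by simp), mul_div_right_comm,
      Nat.mul_div_cancel_left m two_pos, kEven_eq_kernelSeries, kEven_eq_kernelSeries, coneIntegral]
  · refine ⟨cn (2 * m + 1) / 2 ^ (2 * m + 1 + 1), 0, m, zero_le_one, rfl, fun f t x => ?_⟩
    rw [Jtilde, if_neg hn, if_pos (by simp), mul_div_right_comm,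
      show (2 * m + 1 + 1) / 2 = m + 1 by omega, show (2 * m + 1 - 1) / 2 = m by omega,
      kOdd_eq_kernelSeries, kOdd_eq_kernelSeries, coneIntegral]

end Jtilde

theorem Jtilde_decay_general (n : ℕ) :
    ∃ C > (0 : ℝ), ∀ f : EuclideanSpace ℝ (Fin n) → ℝ, Integrable f →
      ∀ (x : EuclideanSpace ℝ (Fin n)) (t : ℝ), 0 ≤ t →
        |Jtilde n f t x| ≤ C * (1 + t) ^ (-(n : ℝ) / 2 - 1) * ∫ y, |f y| := by
  obtain ⟨c, ε, m, hε, hn, hJ⟩ := exists_Jtilde_eq_coneIntegral n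
  have hn' : (n : ℝ) + ε = 2 * m + 1 := by exact_mod_cast hn
  have hexp : (1 - ε : ℝ) / 2 + m + 1 = n / 2 + 1 := by linarith
  have hk₁ := (kernelSeries_isBigO hε (m + 1)).1
  have hsub := (kernelSeries_isBigO hε m).2
  rw [Nat.cast_succ, ← add_assoc, hexp] at hk₁
  rw [hexp] at hsub
  obtain ⟨C, hC, hbound⟩ := exists_exp_mul_abs_coneIntegral_le
    (volume : Measure (EuclideanSpace ℝ (Fin n))) (by positivity) hk₁ hsub
  refine ⟨(|c| + 1) * C, by positivity, fun f hf x t ht => ?_⟩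
  rw [hJ, mul_assoc, abs_mul, abs_mul, abs_exp, show -(n : ℝ) / 2 - 1 = -(n / 2 + 1) by ring,
    mul_assoc (|c| + 1), mul_assoc (|c| + 1)]
  exact mul_le_mul (le_add_of_nonneg_right zero_le_one) (hbound f hf x t ht) (by positivity)
    (by positivity)

/-- For `n ≥ 1` and a non-zero smooth compactly supported `f`, there is
`C = C(n) > 0` such that `|J̃_n(t)f(x)| ≤ C (1+t)^{-n/2-1} ‖f‖_{L¹}` for all `x` and `t > 0`. -/
theorem Jtilde_decay (n : ℕ) (hn : 1 ≤ n) :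
    ∃ C > (0 : ℝ), ∀ (f : EuclideanSpace ℝ (Fin n) → ℝ), f ≠ 0 →
      ContDiff ℝ (⊤ : ℕ∞) f → HasCompactSupport f →
      ∀ (x : EuclideanSpace ℝ (Fin n)) (t : ℝ), 0 < t →
        |Jtilde n f t x| ≤ C * (1 + t) ^ (-(n : ℝ) / 2 - 1) * ∫ y, |f y| := by
  obtain ⟨C, hC, hbound⟩ := Jtilde_decay_general n
  exact ⟨C, hC, fun f _ hf hfc x t ht =>
    hbound f (hf.continuous.integrable_of_hasCompactSupport hfc) x t ht.le⟩
end
end
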